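/- arXiv:2003.10887 — 7 statements merged into one kernel-verified Lean document; each statement's English description precedes it below -/
import Mathlib

section
/- Under the observer setup, let X be an n×n real symmetric positive definite matrix and Y an n×n_y real matrix. Then (X·A + Y·C_y) + (X·A + Y·C_y)ᵀ + (X·B_w̄ + Y·D_w̄)·(X·B_w̄ + Y·D_w̄)ᵀ is negative definite if and only if the symmetric block matrix [[M₁₁, M₁₂, Y], [M₁₂ᵀ, -I_{n_d}, 0], [Yᵀ, 0, -diag(β)]] is negative definite. -/
open Matrix

/-- A real symmetric matrix `M` is negative definite if `xᵀ M x < 0` for all `x ≠ 0`. -/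
def NegDef {n : Type*} [Fintype n] (M : Matrix n n ℝ) : Prop :=
  M.IsSymm ∧ ∀ x : n → ℝ, x ≠ 0 → x ⬝ᵥ M.mulVec x < 0

theorem lhs_form {n nd ny : ℕ} (M : Matrix (Fin n) (Fin n) ℝ) (N : Matrix (Fin n) (Fin nd) ℝ)
    (Y : Matrix (Fin n) (Fin ny) ℝ) (sn : Fin ny → ℝ) (x : Fin n → ℝ) :
    x ⬝ᵥ (M + fromCols N (Y * diagonal sn) * (fromCols N (Y * diagonal sn))ᵀ) *ᵥ x =
      x ⬝ᵥ M *ᵥ x + ∑ i, (Nᵀ *ᵥ x) i ^ 2 + ∑ i, (sn i * (Yᵀ *ᵥ x) i) ^ 2 := by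
  have h1 : x ⬝ᵥ (N * Nᵀ) *ᵥ x = ∑ i, (Nᵀ *ᵥ x) i ^ 2 := by
    rw [← mulVec_mulVec, dotProduct_mulVec, ← mulVec_transpose]
    simp [dotProduct, sq]
  have h2 : x ⬝ᵥ ((Y * diagonal sn) * (Y * diagonal sn)ᵀ) *ᵥ x =
      ∑ i, (sn i * (Yᵀ *ᵥ x) i) ^ 2 := by
    rw [← mulVec_mulVec, dotProduct_mulVec, ← mulVec_transpose, transpose_mul,
      diagonal_transpose, ← mulVec_mulVec]
    simp [dotProduct, sq, mulVec_diagonal]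
  rw [transpose_fromCols, fromCols_mul_fromRows, add_mulVec, add_mulVec, dotProduct_add,
    dotProduct_add, h1, h2, add_assoc]

theorem rhs_form {n nd ny : ℕ} (M : Matrix (Fin n) (Fin n) ℝ) (N : Matrix (Fin n) (Fin nd) ℝ)
    (Y : Matrix (Fin n) (Fin ny) ℝ) (β : Fin ny → ℝ) (x : Fin n → ℝ) (u : Fin nd → ℝ)
    (v : Fin ny → ℝ) :
    (Sum.elim x (Sum.elim u v)) ⬝ᵥ (fromBlocks M (fromCols N Y) (fromRows Nᵀ Yᵀ)
        (fromBlocks (-(1 : Matrix (Fin nd) (Fin nd) ℝ)) 0 0 (-(diagonal β)))) *ᵥ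
        (Sum.elim x (Sum.elim u v)) =
      x ⬝ᵥ M *ᵥ x + ∑ i, (2 * (Nᵀ *ᵥ x) i * u i - u i ^ 2)
        + ∑ i, (2 * (Yᵀ *ᵥ x) i * v i - β i * v i ^ 2) := by
  have h1 : x ⬝ᵥ N *ᵥ u = ∑ i, (Nᵀ *ᵥ x) i * u i := by
    rw [dotProduct_mulVec, ← mulVec_transpose]; rfl
  have h2 : x ⬝ᵥ Y *ᵥ v = ∑ i, (Yᵀ *ᵥ x) i * v i := by
    rw [dotProduct_mulVec, ← mulVec_transpose]; rfl
  have h3 : u ⬝ᵥ Nᵀ *ᵥ x = ∑ i, (Nᵀ *ᵥ x) i * u i := by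
    rw [dotProduct_comm]; rfl
  have h4 : v ⬝ᵥ Yᵀ *ᵥ x = ∑ i, (Yᵀ *ᵥ x) i * v i := by
    rw [dotProduct_comm]; rfl
  have h5 : u ⬝ᵥ u = ∑ i, u i ^ 2 := by simp [dotProduct, sq]
  have h6 : v ⬝ᵥ diagonal β *ᵥ v = ∑ i, β i * v i ^ 2 := by
    simp only [dotProduct, mulVec_diagonal]
    exact Finset.sum_congr rfl fun i _ => by ring
  rw [fromBlocks_mulVec]
  simp only [Sum.elim_comp_inl, Sum.elim_comp_inr, fromCols_mulVec, fromRows_mulVec,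
    fromBlocks_mulVec, zero_mulVec, neg_mulVec, one_mulVec, zero_add, add_zero,
    sumElim_dotProduct_sumElim, dotProduct_add, Sum.elim_add_add, dotProduct_neg,
    h1, h2, h3, h4, h5, h6, Finset.sum_sub_distrib, mul_assoc, ← Finset.mul_sum]
  ring

theorem form_rel {n nd ny : ℕ} (M : Matrix (Fin n) (Fin n) ℝ) (N : Matrix (Fin n) (Fin nd) ℝ)
    (Y : Matrix (Fin n) (Fin ny) ℝ) (sn β : Fin ny → ℝ) (hsn : ∀ i, 0 < sn i)
    (hβ : ∀ i, β i = ((sn i)⁻¹) ^ 2) (x : Fin n → ℝ) (u : Fin nd → ℝ) (v : Fin ny → ℝ) :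
    (Sum.elim x (Sum.elim u v)) ⬝ᵥ (fromBlocks M (fromCols N Y) (fromRows Nᵀ Yᵀ)
        (fromBlocks (-(1 : Matrix (Fin nd) (Fin nd) ℝ)) 0 0 (-(diagonal β)))) *ᵥ
        (Sum.elim x (Sum.elim u v)) =
      x ⬝ᵥ (M + fromCols N (Y * diagonal sn) * (fromCols N (Y * diagonal sn))ᵀ) *ᵥ x
       - ∑ i, (u i - (Nᵀ *ᵥ x) i) ^ 2 - ∑ i, ((sn i)⁻¹ * v i - sn i * (Yᵀ *ᵥ x) i) ^ 2 := by
  rw [lhs_form, rhs_form]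
  have h1 : ∑ i, (2 * (Nᵀ *ᵥ x) i * u i - u i ^ 2) =
      ∑ i, (Nᵀ *ᵥ x) i ^ 2 - ∑ i, (u i - (Nᵀ *ᵥ x) i) ^ 2 := by
    rw [← Finset.sum_sub_distrib]
    exact Finset.sum_congr rfl fun i _ => by ring
  have h2 : ∑ i, (2 * (Yᵀ *ᵥ x) i * v i - β i * v i ^ 2) =
      ∑ i, (sn i * (Yᵀ *ᵥ x) i) ^ 2 - ∑ i, ((sn i)⁻¹ * v i - sn i * (Yᵀ *ᵥ x) i) ^ 2 := by
    rw [← Finset.sum_sub_distrib]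
    refine Finset.sum_congr rfl fun i _ => ?_
    have := (hsn i).ne'
    rw [hβ]
    field_simp
    ring
  rw [h1, h2]
  ring

/-- Schur-complement step of the sparse `H₂` observer LMI: with
`B_w̄ = [B_d S_d  0]`, `D_w̄ = [D_d S_d  S_n]`, `β i = ((S_n)ᵢᵢ)⁻²`,
`M₁₁ = (XA + YC_y) + (XA + YC_y)ᵀ` and `M₁₂ = X B_d S_d + Y D_d S_d`,
the matrix `M₁₁ + (X B_w̄ + Y D_w̄)(X B_w̄ + Y D_w̄)ᵀ` is negative definite iff
`[[M₁₁, M₁₂, Y], [M₁₂ᵀ, -I, 0], [Yᵀ, 0, -diag β]]` is negative definite. -/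
theorem h2_lmi_schur_step {n nd ny nz : ℕ}
    (A : Matrix (Fin n) (Fin n) ℝ) (Cy : Matrix (Fin ny) (Fin n) ℝ)
    (Cz : Matrix (Fin nz) (Fin n) ℝ) (Bd : Matrix (Fin n) (Fin nd) ℝ)
    (Dd : Matrix (Fin ny) (Fin nd) ℝ)
    (sd : Fin nd → ℝ) (sn : Fin ny → ℝ) (hsn : ∀ i, 0 < sn i)
    (X : Matrix (Fin n) (Fin n) ℝ) (Y : Matrix (Fin n) (Fin ny) ℝ)
    (hX : X.PosDef)
    -- the diagonal scaling matrices
    (Sd : Matrix (Fin nd) (Fin nd) ℝ) (Sn : Matrix (Fin ny) (Fin ny) ℝ)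
    (hSd : Sd = diagonal sd) (hSn : Sn = diagonal sn)
    -- scaled disturbance input matrices
    (Bw : Matrix (Fin n) (Fin nd ⊕ Fin ny) ℝ) (Dw : Matrix (Fin ny) (Fin nd ⊕ Fin ny) ℝ)
    (hBw : Bw = fromCols (Bd * Sd) 0) (hDw : Dw = fromCols (Dd * Sd) Sn)
    -- the precision vector
    (β : Fin ny → ℝ) (hβ : ∀ i, β i = ((sn i)⁻¹) ^ 2)
    -- the LMI blocks
    (M₁₁ : Matrix (Fin n) (Fin n) ℝ) (M₁₂ : Matrix (Fin n) (Fin nd) ℝ)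
    (hM₁₁ : M₁₁ = (X * A + Y * Cy) + (X * A + Y * Cy)ᵀ)
    (hM₁₂ : M₁₂ = X * Bd * Sd + Y * Dd * Sd) :
    NegDef ((X * A + Y * Cy) + (X * A + Y * Cy)ᵀ
        + (X * Bw + Y * Dw) * (X * Bw + Y * Dw)ᵀ) ↔
      NegDef (fromBlocks M₁₁ (fromCols M₁₂ Y) (fromRows M₁₂ᵀ Yᵀ)
        (fromBlocks (-(1 : Matrix (Fin nd) (Fin nd) ℝ)) 0 0 (-(diagonal β)))) := by
  have hW : X * Bw + Y * Dw = fromCols M₁₂ (Y * diagonal sn) := by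
    rw [hBw, hDw, hM₁₂, ← hSn, mul_fromCols, mul_fromCols]
    ext i (j | j) <;> simp [Matrix.mul_assoc]
  rw [hW, ← hM₁₁]
  have hsym : M₁₁.IsSymm := by
    rw [hM₁₁]; exact isSymm_add_transpose_self _
  constructor
  · rintro ⟨-, h⟩
    refine ⟨?_, fun z hz => ?_⟩
    · refine IsSymm.fromBlocks hsym (by rw [transpose_fromCols]) ?_
      refine IsSymm.fromBlocks ?_ (by simp) ?_ <;> simp [IsSymm]
    · obtain ⟨x, u, v, rfl⟩ : ∃ x u v, z = Sum.elim x (Sum.elim u v) :=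
        ⟨z ∘ Sum.inl, z ∘ Sum.inr ∘ Sum.inl, z ∘ Sum.inr ∘ Sum.inr, by
          ext (i | i | i) <;> rfl⟩
      rw [form_rel M₁₁ M₁₂ Y sn β hsn hβ]
      have e1 : 0 ≤ ∑ i, (u i - (M₁₂ᵀ *ᵥ x) i) ^ 2 := Finset.sum_nonneg fun i _ => sq_nonneg _
      have e2 : 0 ≤ ∑ i, ((sn i)⁻¹ * v i - sn i * (Yᵀ *ᵥ x) i) ^ 2 :=
        Finset.sum_nonneg fun i _ => sq_nonneg _
      by_cases hx : x = 0
      · subst hx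
        simp only [mulVec_zero, dotProduct_zero, Pi.zero_apply, mul_zero, sub_zero, zero_sub]
          at e1 e2 ⊢
        by_contra hcon
        have f1 : ∑ i, u i ^ 2 = 0 := by linarith
        have f2 : ∑ i, ((sn i)⁻¹ * v i) ^ 2 = 0 := by linarith
        rw [Finset.sum_eq_zero_iff_of_nonneg fun i _ => sq_nonneg _] at f1 f2
        apply hz
        ext (i | i | i)
        · rfl
        · simpa using f1 i (Finset.mem_univ i)
        · simpa [(hsn i).ne'] using f2 i (Finset.mem_univ i)
      · have := h x hx
        linarith
  · rintro ⟨-, h⟩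
    refine ⟨?_, fun x hx => ?_⟩
    · exact hsym.add (by rw [IsSymm, transpose_mul, transpose_transpose])
    · have hz : Sum.elim x (Sum.elim (M₁₂ᵀ *ᵥ x) (fun i => sn i ^ 2 * (Yᵀ *ᵥ x) i)) ≠ 0 := by
        intro h0
        apply hx
        ext i
        exact congrFun h0 (Sum.inl i)
      have := h _ hz
      rw [form_rel M₁₁ M₁₂ Y sn β hsn hβ] at this
      have e : ∑ i, ((sn i)⁻¹ * (sn i ^ 2 * (Yᵀ *ᵥ x) i) - sn i * (Yᵀ *ᵥ x) i) ^ 2 = 0 := by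
        refine Finset.sum_eq_zero fun i _ => ?_
        have := (hsn i).ne'
        field_simp
        ring
      rw [e] at this
      simpa using this
end

section
/- Let P be an n×n real symmetric positive definite matrix, C an n_z×n real matrix, and γ > 0 a real number. Then trace(C·P·Cᵀ) < γ² if and only if there exists an n_z×n_z real symmetric positive definite matrix Q such that the block matrix [[-Q, C], [Cᵀ, -P⁻¹]] is negative definite and trace(Q) < γ². -/
open Matrix

theorem aux_form {n nz : ℕ}
    (P : Matrix (Fin n) (Fin n) ℝ) (C : Matrix (Fin nz) (Fin n) ℝ) (Q : Matrix (Fin nz) (Fin nz) ℝ)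
    (hP : P.PosDef) (x : Fin nz → ℝ) (y : Fin n → ℝ) :
    (Sum.elim x y) ⬝ᵥ (fromBlocks (-Q) C Cᵀ (-P⁻¹)).mulVec (Sum.elim x y) =
      -((y - (P * Cᵀ) *ᵥ x) ⬝ᵥ P⁻¹ *ᵥ (y - (P * Cᵀ) *ᵥ x)) - x ⬝ᵥ (Q - C * P * Cᵀ) *ᵥ x := by
  have hu : IsUnit P.det := (Matrix.isUnit_iff_isUnit_det _).1 hP.isUnit
  have hS : Pᵀ = P := by simpa using hP.isHermitian.eq
  have e1 : P⁻¹ *ᵥ ((P * Cᵀ) *ᵥ x) = Cᵀ *ᵥ x := by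
    rw [mulVec_mulVec, ← Matrix.mul_assoc, Matrix.nonsing_inv_mul _ hu, Matrix.one_mul]
  have e2 : ((P * Cᵀ) *ᵥ x) ⬝ᵥ P⁻¹ *ᵥ y = x ⬝ᵥ C *ᵥ y := by
    rw [dotProduct_comm, ← dotProduct_transpose_mulVec, dotProduct_comm, dotProduct_comm, mulVec_mulVec,
      transpose_mul, hS, transpose_transpose, Matrix.mul_assoc, Matrix.mul_nonsing_inv _ hu,
      Matrix.mul_one]
  have e3 : y ⬝ᵥ Cᵀ *ᵥ x = x ⬝ᵥ C *ᵥ y := by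
    rw [dotProduct_transpose_mulVec]
  have e4 : ((P * Cᵀ) *ᵥ x) ⬝ᵥ Cᵀ *ᵥ x = x ⬝ᵥ (C * P * Cᵀ) *ᵥ x := by
    rw [dotProduct_transpose_mulVec, mulVec_mulVec, Matrix.mul_assoc]
  rw [fromBlocks_mulVec]
  simp only [sumElim_dotProduct_sumElim, Sum.elim_comp_inl, Sum.elim_comp_inr, mulVec_sub, sub_mulVec, dotProduct_sub,
    sub_dotProduct, neg_mulVec, dotProduct_add, dotProduct_neg, e1, e2, e3, e4]
  ring

/-- Trace-constraint reformulation: for `P` symmetric positive definite and `γ > 0`,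
`trace (C P Cᵀ) < γ²` iff there is a symmetric positive definite `Q` with
`[[-Q, C], [Cᵀ, -P⁻¹]]` negative definite and `trace Q < γ²`. -/
theorem trace_constraint_lmi {n nz : ℕ}
    (P : Matrix (Fin n) (Fin n) ℝ) (C : Matrix (Fin nz) (Fin n) ℝ)
    (γ : ℝ) (hP : P.PosDef) (hγ : 0 < γ) :
    (C * P * Cᵀ).trace < γ ^ 2 ↔
      ∃ Q : Matrix (Fin nz) (Fin nz) ℝ, Q.PosDef ∧
        NegDef (fromBlocks (-Q) C Cᵀ (-P⁻¹)) ∧ Q.trace < γ ^ 2 := by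
  constructor
  · intro h
    set t := (C * P * Cᵀ).trace with ht
    have hn : (0 : ℝ) < nz + 1 := by positivity
    have hε : 0 < (γ ^ 2 - t) / (nz + 1) := div_pos (by linarith) hn
    have hεm : (γ ^ 2 - t) / (nz + 1) * (nz + 1) = γ ^ 2 - t := div_mul_cancel₀ _ hn.ne'
    set ε := (γ ^ 2 - t) / (nz + 1) with hεd
    have hE : (ε • (1 : Matrix (Fin nz) (Fin nz) ℝ)).PosDef := PosDef.one.smul hε
    have hS : (C * P * Cᵀ).PosSemidef := by
      simpa using hP.posSemidef.mul_mul_conjTranspose_same C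
    have hQ := hE.posSemidef_add hS
    refine ⟨_, hQ, ⟨?_, ?_⟩, ?_⟩
    · have h1 := hQ.isHermitian.eq
      have h2 := hP.inv.isHermitian.eq
      rw [conjTranspose_eq_transpose_of_trivial] at h1 h2
      rw [IsSymm, fromBlocks_transpose, transpose_neg, transpose_neg, h1, h2, transpose_transpose]
    · intro z hz
      obtain ⟨x, y, rfl⟩ : ∃ x y, z = Sum.elim x y := ⟨_, _, (Sum.elim_comp_inl_inr z).symm⟩
      rw [aux_form P C _ hP, add_sub_cancel_left]
      by_cases hx : x = 0
      · subst hx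
        have hy : y ≠ 0 := by
          rintro rfl
          apply hz
          ext i
          cases i <;> rfl
        have := hP.inv.dotProduct_mulVec_pos hy
        simp at this ⊢
        exact this
      · have h1 := hE.dotProduct_mulVec_pos hx
        have h2 := hP.inv.posSemidef.dotProduct_mulVec_nonneg (y - (P * Cᵀ) *ᵥ x)
        rw [star_trivial] at h1 h2
        linarith
    · rw [trace_add, trace_smul, trace_one, ← ht]
      simp only [Fintype.card_fin, smul_eq_mul]
      linarith
  · rintro ⟨Q, hQ, ⟨-, hN⟩, htr⟩
    refine lt_of_le_of_lt ?_ htr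
    refine Finset.sum_le_sum fun i _ => ?_
    have h := hN (Sum.elim (Pi.single i 1) ((P * Cᵀ) *ᵥ (Pi.single i 1))) (by
      intro h
      have := congrFun h (Sum.inl i)
      simp at this)
    rw [aux_form P C _ hP] at h
    simp only [sub_self, mulVec_zero, dotProduct_zero, mulVec_single_one, single_one_dotProduct] at h
    simp only [col_apply, Matrix.sub_apply] at h
    simp only [diag_apply]
    linarith
end

section
/- Under the observer setup, fix an n×n real symmetric positive definite matrix X, an n×n_y real matrix Y, and a real γ > 0, and set P = X⁻¹ and L = X⁻¹·Y. Then the following two conditions are equivalent: (i) (A + L·C_y)·P + P·(A + L·C_y)ᵀ + (B_w̄ + L·D_w̄)·(B_w̄ + L·D_w̄)ᵀ is negative definite and trace(C_z·P·C_zᵀ) < γ²; (ii) the block matrix [[M₁₁, M₁₂, Y], [M₁₂ᵀ, -I_{n_d}, 0], [Yᵀ, 0, -diag(β)]] is negative definite, and there exists an n_z×n_z symmetric positive definite matrix Q with [[-Q, C_z], [C_zᵀ, -X]] negative definite and trace(Q) < γ². -/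
open Matrix

theorem negDef_iff {m : Type*} [Fintype m] (M : Matrix m m ℝ) :
    NegDef M ↔ (-M).PosDef := by
  rw [posDef_iff_dotProduct_mulVec]
  unfold NegDef
  refine and_congr ?_ ?_
  · rw [Matrix.IsHermitian, conjTranspose_eq_transpose_of_trivial, transpose_neg, neg_inj]
    rfl
  · simp [neg_mulVec]

theorem posDef_schur {m k : Type*} [Fintype m] [Fintype k] [DecidableEq k]
    (A : Matrix m m ℝ) (B : Matrix m k ℝ) {D : Matrix k k ℝ} (hD : D.PosDef) :
    (fromBlocks A B Bᴴ D).PosDef ↔ (A - B * D⁻¹ * Bᴴ).PosDef := by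
  letI := hD.isUnit.invertible
  rw [posDef_iff_dotProduct_mulVec, IsHermitian.fromBlocks₂₂ _ _ hD.1]
  constructor
  · refine fun h => .of_dotProduct_mulVec_pos h.1 fun x hx => ?_
    have hne : Sum.elim x (-((D⁻¹ * Bᴴ) *ᵥ x)) ≠ 0 := by
      intro h0
      apply hx
      funext i
      exact congrFun h0 (Sum.inl i)
    have := h.2 hne
    rwa [dotProduct_mulVec, schur_complement_eq₂₂ A B _ _ hD.1, add_neg_cancel, dotProduct_zero,
      zero_add, ← dotProduct_mulVec] at this
  · refine fun h => ⟨h.1, fun x hx => ?_⟩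
    rw [dotProduct_mulVec, ← Sum.elim_comp_inl_inr x, schur_complement_eq₂₂ A B _ _ hD.1,
      ← dotProduct_mulVec, ← dotProduct_mulVec (star (x ∘ Sum.inl))]
    by_cases h1 : x ∘ Sum.inl = 0
    · have h2 : x ∘ Sum.inr ≠ 0 := by
        intro h2
        apply hx
        rw [← Sum.elim_comp_inl_inr x, h1, h2]
        funext i
        cases i <;> rfl
      rw [h1]
      simpa using hD.dotProduct_mulVec_pos h2
    · exact add_pos_of_nonneg_of_pos
        ((posSemidef_iff_dotProduct_mulVec.mp hD.posSemidef).2 _) (h.dotProduct_mulVec_pos h1)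

theorem negDef_schur {m k : Type*} [Fintype m] [Fintype k] [DecidableEq k]
    (A : Matrix m m ℝ) (B : Matrix m k ℝ) {D : Matrix k k ℝ} (hD : D.PosDef) :
    NegDef (fromBlocks A B Bᵀ (-D)) ↔ NegDef (A + B * D⁻¹ * Bᵀ) := by
  rw [negDef_iff, negDef_iff, fromBlocks_neg, neg_neg]
  have h := posDef_schur (-A) (-B) hD
  simp only [conjTranspose_eq_transpose_of_trivial, transpose_neg] at h
  rw [h]
  have : -A - -B * D⁻¹ * -Bᵀ = -(A + B * D⁻¹ * Bᵀ) := by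
    simp only [Matrix.neg_mul, Matrix.mul_neg]
    abel
  rw [this]

theorem negDef_conj {m : Type*} [Fintype m] [DecidableEq m] {X : Matrix m m ℝ} (hX : X.PosDef)
    (N : Matrix m m ℝ) : NegDef (X * N * X) ↔ NegDef N := by
  rw [negDef_iff, negDef_iff, ← IsUnit.posDef_star_right_conjugate_iff hX.isUnit (x := -N)]
  have : star X = X := hX.1
  rw [this]
  simp

/-- Equivalence between the `H₂`-norm matrix-inequality characterization in terms of
`(P, L) = (X⁻¹, X⁻¹ Y)` and the LMI of Theorem 1. -/
theorem h2_observer_equiv {n nd ny nz : ℕ}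
    (A : Matrix (Fin n) (Fin n) ℝ) (Cy : Matrix (Fin ny) (Fin n) ℝ)
    (Cz : Matrix (Fin nz) (Fin n) ℝ) (Bd : Matrix (Fin n) (Fin nd) ℝ)
    (Dd : Matrix (Fin ny) (Fin nd) ℝ)
    (sd : Fin nd → ℝ) (sn : Fin ny → ℝ) (hsn : ∀ i, 0 < sn i)
    (Sd : Matrix (Fin nd) (Fin nd) ℝ) (Sn : Matrix (Fin ny) (Fin ny) ℝ)
    (hSd : Sd = diagonal sd) (hSn : Sn = diagonal sn)
    (Bw : Matrix (Fin n) (Fin nd ⊕ Fin ny) ℝ) (Dw : Matrix (Fin ny) (Fin nd ⊕ Fin ny) ℝ)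
    (hBw : Bw = fromCols (Bd * Sd) 0) (hDw : Dw = fromCols (Dd * Sd) Sn)
    (β : Fin ny → ℝ) (hβ : ∀ i, β i = ((sn i)⁻¹) ^ 2)
    (X : Matrix (Fin n) (Fin n) ℝ) (Y : Matrix (Fin n) (Fin ny) ℝ)
    (hX : X.PosDef) (γ : ℝ) (hγ : 0 < γ)
    (P : Matrix (Fin n) (Fin n) ℝ) (L : Matrix (Fin n) (Fin ny) ℝ)
    (hP : P = X⁻¹) (hL : L = X⁻¹ * Y)
    (M₁₁ : Matrix (Fin n) (Fin n) ℝ) (M₁₂ : Matrix (Fin n) (Fin nd) ℝ)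
    (hM₁₁ : M₁₁ = (X * A + Y * Cy) + (X * A + Y * Cy)ᵀ)
    (hM₁₂ : M₁₂ = X * Bd * Sd + Y * Dd * Sd) :
    (NegDef ((A + L * Cy) * P + P * (A + L * Cy)ᵀ
        + (Bw + L * Dw) * (Bw + L * Dw)ᵀ)
      ∧ (Cz * P * Czᵀ).trace < γ ^ 2) ↔
    (NegDef (fromBlocks M₁₁ (fromCols M₁₂ Y) (fromRows M₁₂ᵀ Yᵀ)
        (fromBlocks (-(1 : Matrix (Fin nd) (Fin nd) ℝ)) 0 0 (-(diagonal β))))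
      ∧ ∃ Q : Matrix (Fin nz) (Fin nz) ℝ, Q.PosDef ∧
          NegDef (fromBlocks (-Q) Cz Czᵀ (-X)) ∧ Q.trace < γ ^ 2) := by
  have hXu : IsUnit X.det := (Matrix.isUnit_iff_isUnit_det X).1 hX.isUnit
  have hXt : Xᵀ = X := by
    have := hX.1
    rwa [Matrix.IsHermitian, conjTranspose_eq_transpose_of_trivial] at this
  have hXP : X * P = 1 := by rw [hP, mul_nonsing_inv _ hXu]
  have hPX : P * X = 1 := by rw [hP, nonsing_inv_mul _ hXu]
  have hXL : X * L = Y := by rw [hL, ← Matrix.mul_assoc, mul_nonsing_inv _ hXu, Matrix.one_mul]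
  have hβpos : ∀ i, 0 < β i := fun i => by
    rw [hβ]
    have := hsn i
    positivity
  refine and_congr ?_ ?_
  · have hDeq : fromBlocks (-(1 : Matrix (Fin nd) (Fin nd) ℝ)) 0 0 (-(diagonal β))
        = -(diagonal (Sum.elim (fun _ => (1 : ℝ)) β)) := by
      rw [← fromBlocks_diagonal, fromBlocks_neg]
      simp
    have hD : (diagonal (Sum.elim (fun _ : Fin nd => (1 : ℝ)) β)).PosDef := by
      rw [posDef_diagonal_iff]
      rintro (i | i)
      · simp
      · simpa using hβpos i
    have hDinv : (diagonal (Sum.elim (fun _ : Fin nd => (1 : ℝ)) β))⁻¹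
        = fromBlocks (1 : Matrix (Fin nd) (Fin nd) ℝ) 0 0 (Sn * Snᵀ) := by
      apply inv_eq_right_inv
      rw [← fromBlocks_diagonal, fromBlocks_multiply, hSn, diagonal_transpose,
        diagonal_mul_diagonal, diagonal_mul_diagonal]
      have : (fun i => β i * (sn i * sn i)) = fun _ => 1 := by
        funext i
        rw [hβ]
        have := (hsn i).ne'
        field_simp
      rw [this]
      simp
    have hrow : fromRows M₁₂ᵀ Yᵀ = (fromCols M₁₂ Y)ᵀ := by
      rw [transpose_fromCols]
    rw [hDeq, hrow, negDef_schur _ _ hD, hDinv, ← negDef_conj hX]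
    have hW : X * (Bw + L * Dw) = fromCols M₁₂ (Y * Sn) := by
      rw [Matrix.mul_add, ← Matrix.mul_assoc, hXL, hBw, hDw, hM₁₂, mul_fromCols, mul_fromCols]
      ext i (j | j) <;> simp [Matrix.mul_assoc]
    have hAL : X * (A + L * Cy) = X * A + Y * Cy := by
      rw [Matrix.mul_add, ← Matrix.mul_assoc, hXL]
    have e1 : X * ((A + L * Cy) * P + P * (A + L * Cy)ᵀ
        + (Bw + L * Dw) * (Bw + L * Dw)ᵀ) * X
        = X * (A + L * Cy) * (P * X) + (X * P) * (X * (A + L * Cy))ᵀ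
          + (X * (Bw + L * Dw)) * (X * (Bw + L * Dw))ᵀ := by
      rw [transpose_mul X (A + L * Cy), transpose_mul X (Bw + L * Dw), hXt]
      simp only [Matrix.mul_add, Matrix.add_mul, Matrix.mul_assoc]
    rw [e1, hXP, hPX, hW, hAL, Matrix.mul_one, Matrix.one_mul, ← hM₁₁]
    have e2 : fromCols M₁₂ (Y * Sn) * (fromCols M₁₂ (Y * Sn))ᵀ
        = fromCols M₁₂ Y *
          fromBlocks (1 : Matrix (Fin nd) (Fin nd) ℝ) 0 0 (Sn * Snᵀ) * (fromCols M₁₂ Y)ᵀ := by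
      rw [fromCols_mul_fromBlocks, transpose_fromCols, transpose_fromCols,
        fromCols_mul_fromRows, fromCols_mul_fromRows, transpose_mul]
      simp [Matrix.mul_assoc]
    rw [e2]
  · have hneg : ∀ Q : Matrix (Fin nz) (Fin nz) ℝ,
        NegDef (fromBlocks (-Q) Cz Czᵀ (-X)) ↔ (Q - Cz * P * Czᵀ).PosDef := by
      intro Q
      rw [negDef_schur _ _ hX, negDef_iff, ← hP]
      have : -(-Q + Cz * P * Czᵀ) = Q - Cz * P * Czᵀ := by abel
      rw [this]
    constructor
    · intro h
      set t := (Cz * P * Czᵀ).trace with ht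
      have hε : 0 < (γ ^ 2 - t) / (nz + 1) := div_pos (by linarith) (by positivity)
      set ε := (γ ^ 2 - t) / (nz + 1) with hεd
      have hpd : (ε • (1 : Matrix (Fin nz) (Fin nz) ℝ)).PosDef := PosDef.one.smul hε
      have hps : (Cz * P * Czᵀ).PosSemidef := by
        have := (hP ▸ hX.inv : P.PosDef).posSemidef.mul_mul_conjTranspose_same Cz
        rwa [conjTranspose_eq_transpose_of_trivial] at this
      refine ⟨Cz * P * Czᵀ + ε • (1 : Matrix (Fin nz) (Fin nz) ℝ), ?_, ?_, ?_⟩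
      · exact PosDef.posSemidef_add hps hpd
      · rw [hneg, add_sub_cancel_left]
        exact hpd
      · rw [trace_add, trace_smul, trace_one, Fintype.card_fin, ← ht, smul_eq_mul]
        have : ε * (nz + 1) = γ ^ 2 - t := by
          rw [hεd]
          field_simp
        linarith
    · rintro ⟨Q, -, hQ, htr⟩
      rw [hneg] at hQ
      have := hQ.posSemidef.trace_nonneg
      rw [trace_sub] at this
      linarith
end

section
/- Under the observer setup, let X be an n×n real symmetric positive definite matrix and Y an n×n_y real matrix such that the block matrix [[M₁₁, M₁₂, Y], [M₁₂ᵀ, -I_{n_d}, 0], [Yᵀ, 0, -diag(β)]] is negative definite. Then every complex eigenvalue of A + X⁻¹·Y·C_y has negative real part, i.e., the observer error dynamics matrix A + L·C_y with L = X⁻¹·Y is Hurwitz. -/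
open Matrix

/-- Feasibility of the `H₂` LMI of Theorem 1 yields a stabilizing observer gain:
if `[[M₁₁, M₁₂, Y], [M₁₂ᵀ, -I, 0], [Yᵀ, 0, -diag β]] ≺ 0` with `X ≻ 0`, then every
complex eigenvalue of `A + X⁻¹ Y C_y` has negative real part. -/
theorem h2_lmi_hurwitz {n nd ny nz : ℕ}
    (A : Matrix (Fin n) (Fin n) ℝ) (Cy : Matrix (Fin ny) (Fin n) ℝ)
    (Cz : Matrix (Fin nz) (Fin n) ℝ) (Bd : Matrix (Fin n) (Fin nd) ℝ)
    (Dd : Matrix (Fin ny) (Fin nd) ℝ)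
    (sd : Fin nd → ℝ) (sn : Fin ny → ℝ) (hsn : ∀ i, 0 < sn i)
    (Sd : Matrix (Fin nd) (Fin nd) ℝ) (hSd : Sd = diagonal sd)
    (β : Fin ny → ℝ) (hβ : ∀ i, β i = ((sn i)⁻¹) ^ 2)
    (X : Matrix (Fin n) (Fin n) ℝ) (Y : Matrix (Fin n) (Fin ny) ℝ)
    (hX : X.PosDef)
    (M₁₁ : Matrix (Fin n) (Fin n) ℝ) (M₁₂ : Matrix (Fin n) (Fin nd) ℝ)
    (hM₁₁ : M₁₁ = (X * A + Y * Cy) + (X * A + Y * Cy)ᵀ)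
    (hM₁₂ : M₁₂ = X * Bd * Sd + Y * Dd * Sd)
    (hLMI : NegDef (fromBlocks M₁₁ (fromCols M₁₂ Y) (fromRows M₁₂ᵀ Yᵀ)
      (fromBlocks (-(1 : Matrix (Fin nd) (Fin nd) ℝ)) 0 0 (-(diagonal β))))) :
    ∀ μ : ℂ, Module.End.HasEigenvalue
      (Matrix.mulVecLin (((A + X⁻¹ * Y * Cy)).map (Complex.ofReal : ℝ → ℂ))) μ →
      μ.re < 0 := by
  intro μ hμ
  obtain ⟨v, hv⟩ := hμ.exists_hasEigenvector
  have hv0 : v ≠ 0 := hv.2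
  have hev := hv.apply_eq_smul
  rw [Matrix.mulVecLin_apply] at hev
  set F := A + X⁻¹ * Y * Cy with hF
  have hXF : X * F = X * A + Y * Cy := by
    rw [hF, Matrix.mul_add, Matrix.mul_assoc, ← Matrix.mul_assoc X X⁻¹,
      Matrix.mul_nonsing_inv _ ((Matrix.isUnit_iff_isUnit_det _).1 hX.isUnit), Matrix.one_mul]
  let a : Fin n → ℝ := fun i => (v i).re
  let b : Fin n → ℝ := fun i => (v i).im
  have ha : F *ᵥ a = μ.re • a - μ.im • b := by
    ext i
    have := congrArg Complex.re (congrFun hev i)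
    simpa [Matrix.mulVec, dotProduct, a, b] using this
  have hb : F *ᵥ b = μ.re • b + μ.im • a := by
    ext i
    have := congrArg Complex.im (congrFun hev i)
    simpa [Matrix.mulVec, dotProduct, a, b] using this
  have key : ∀ x : Fin n → ℝ, x ≠ 0 → x ⬝ᵥ X *ᵥ (F *ᵥ x) < 0 := by
    intro x hx
    have h := hLMI.2 (Sum.elim x 0) (by
      intro h; apply hx; ext i; simpa using congrFun h (Sum.inl i))
    rw [Matrix.fromBlocks_mulVec] at h
    simp only [Sum.elim_comp_inl, Sum.elim_comp_inr, Matrix.mulVec_zero, add_zero,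
      sumElim_dotProduct_sumElim, zero_dotProduct] at h
    rw [hM₁₁, ← hXF, Matrix.add_mulVec, dotProduct_add, Matrix.mulVec_transpose,
      dotProduct_comm x (x ᵥ* _), ← Matrix.dotProduct_mulVec, ← Matrix.mulVec_mulVec] at h
    linarith
  have hpos : ∀ x : Fin n → ℝ, x ≠ 0 → 0 < x ⬝ᵥ X *ᵥ x := by
    intro x hx
    simpa using hX.dotProduct_mulVec_pos hx
  have hsymm : a ⬝ᵥ X *ᵥ b = b ⬝ᵥ X *ᵥ a := by
    have hT : Xᵀ = X := by simpa using hX.isHermitian.eq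
    rw [Matrix.dotProduct_mulVec, ← Matrix.mulVec_transpose, hT, dotProduct_comm]
  have e1 : a ⬝ᵥ X *ᵥ (F *ᵥ a) = μ.re * (a ⬝ᵥ X *ᵥ a) - μ.im * (a ⬝ᵥ X *ᵥ b) := by
    rw [ha]; simp [Matrix.mulVec_sub, Matrix.mulVec_smul]
  have e2 : b ⬝ᵥ X *ᵥ (F *ᵥ b) = μ.re * (b ⬝ᵥ X *ᵥ b) + μ.im * (b ⬝ᵥ X *ᵥ a) := by
    rw [hb]; simp [Matrix.mulVec_add, Matrix.mulVec_smul]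
  have hsum : a ⬝ᵥ X *ᵥ (F *ᵥ a) + b ⬝ᵥ X *ᵥ (F *ᵥ b)
      = μ.re * (a ⬝ᵥ X *ᵥ a + b ⬝ᵥ X *ᵥ b) := by
    rw [e1, e2, hsymm]; ring
  have hfin : 0 < a ⬝ᵥ X *ᵥ a + b ⬝ᵥ X *ᵥ b ∧
      a ⬝ᵥ X *ᵥ (F *ᵥ a) + b ⬝ᵥ X *ᵥ (F *ᵥ b) < 0 := by
    by_cases h1 : a = 0
    · have h2 : b ≠ 0 := by
        intro h2
        apply hv0
        ext i
        exact Complex.ext (congrFun h1 i) (congrFun h2 i)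
      rw [h1]
      simpa using And.intro (hpos b h2) (key b h2)
    · by_cases h2 : b = 0
      · rw [h2]
        simpa using And.intro (hpos a h1) (key a h1)
      · exact ⟨add_pos (hpos a h1) (hpos b h2), add_neg (key a h1) (key b h2)⟩
  rw [hsum] at hfin
  by_contra hc
  have := mul_nonneg (not_lt.1 hc) hfin.1.le
  linarith [hfin.2]
end

section
/- Under the observer setup, let X be an n×n real symmetric matrix, Y an n×n_y real matrix, and γ > 0 a real number, and let κ ∈ ℝ^{n_y} be defined by κ_i = ((S_n)_{ii})⁻¹. Then (X·A + Y·C_y) + (X·A + Y·C_y)ᵀ + C_zᵀ·C_z + γ⁻²·(X·B_w̄ + Y·D_w̄)·(X·B_w̄ + Y·D_w̄)ᵀ is negative definite if and only if the symmetric block matrix [[M₁₁, M₁₂, C_zᵀ, Y], [M₁₂ᵀ, -γ²·I_{n_d}, 0, 0], [C_z, 0, -I_{n_z}, 0], [Yᵀ, 0, 0, -γ²·diag(κ²)]] is negative definite, where κ² denotes the vector with entries κ_i². -/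
open Matrix

lemma schur_quad {m k : Type*} [Fintype m] [Fintype k] [DecidableEq k]
    (P : Matrix m m ℝ) (B : Matrix m k ℝ) (d : k → ℝ) (hd : ∀ i, 0 < d i)
    (x : m → ℝ) (y : k → ℝ) :
    Sum.elim x y ⬝ᵥ (fromBlocks P B Bᵀ (-(diagonal d))).mulVec (Sum.elim x y)
      = x ⬝ᵥ (P + B * diagonal (fun i => (d i)⁻¹) * Bᵀ).mulVec x
        - ∑ i, d i * (y i - (d i)⁻¹ * (Bᵀ *ᵥ x) i) ^ 2 := by
  have h1 : x ⬝ᵥ B *ᵥ y = ∑ i, (Bᵀ *ᵥ x) i * y i := by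
    rw [dotProduct_mulVec, ← mulVec_transpose]; rfl
  have h2 : x ⬝ᵥ (B * diagonal (fun i => (d i)⁻¹) * Bᵀ) *ᵥ x
      = ∑ i, (d i)⁻¹ * (Bᵀ *ᵥ x) i ^ 2 := by
    rw [← mulVec_mulVec, ← mulVec_mulVec, dotProduct_mulVec, ← mulVec_transpose]
    simp only [dotProduct, mulVec_diagonal]
    exact Finset.sum_congr rfl fun i _ => by ring
  have h3 : y ⬝ᵥ Bᵀ *ᵥ x = ∑ i, (Bᵀ *ᵥ x) i * y i := by
    simp only [dotProduct]
    exact Finset.sum_congr rfl fun i _ => by ring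
  have h4 : y ⬝ᵥ (-(diagonal d)) *ᵥ y = - ∑ i, d i * y i ^ 2 := by
    rw [neg_mulVec, dotProduct_neg]
    simp only [dotProduct, mulVec_diagonal]
    congr 1
    exact Finset.sum_congr rfl fun i _ => by ring
  rw [fromBlocks_mulVec, sumElim_dotProduct_sumElim, add_mulVec]
  simp only [Sum.elim_comp_inl, Sum.elim_comp_inr, dotProduct_add]
  rw [h1, h2, h3, h4]
  have h5 : ∑ i, d i * (y i - (d i)⁻¹ * (Bᵀ *ᵥ x) i) ^ 2
      = ∑ i, d i * y i ^ 2 - 2 * ∑ i, (Bᵀ *ᵥ x) i * y i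
        + ∑ i, (d i)⁻¹ * (Bᵀ *ᵥ x) i ^ 2 := by
    rw [Finset.mul_sum, ← Finset.sum_sub_distrib, ← Finset.sum_add_distrib]
    refine Finset.sum_congr rfl fun i _ => ?_
    have := (hd i).ne'
    field_simp
    ring
  rw [h5]; ring

lemma schur_negDef {m k : Type*} [Fintype m] [Fintype k] [DecidableEq k]
    (P : Matrix m m ℝ) (hP : P.IsSymm) (B : Matrix m k ℝ) (d : k → ℝ) (hd : ∀ i, 0 < d i) :
    NegDef (P + B * diagonal (fun i => (d i)⁻¹) * Bᵀ) ↔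
      NegDef (fromBlocks P B Bᵀ (-(diagonal d))) := by
  constructor
  · rintro ⟨-, h⟩
    refine ⟨?_, fun z hz => ?_⟩
    · simp [Matrix.IsSymm, fromBlocks_transpose, hP.eq]
    · obtain ⟨x, y, rfl⟩ : ∃ x y, z = Sum.elim x y :=
        ⟨z ∘ Sum.inl, z ∘ Sum.inr, (Sum.elim_comp_inl_inr z).symm⟩
      rw [schur_quad P B d hd]
      have h0 : ∀ i ∈ Finset.univ, 0 ≤ d i * (y i - (d i)⁻¹ * (Bᵀ *ᵥ x) i) ^ 2 :=
        fun i _ => mul_nonneg (hd i).le (sq_nonneg _)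
      by_cases hx : x = 0
      · subst hx
        have hy : ∃ i, y i ≠ 0 := by
          by_contra! hy
          apply hz
          ext (i | i)
          · rfl
          · exact hy i
        obtain ⟨i, hi⟩ := hy
        have : 0 < ∑ i, d i * (y i - (d i)⁻¹ * (Bᵀ *ᵥ (0 : m → ℝ)) i) ^ 2 := by
          refine Finset.sum_pos' h0 ⟨i, Finset.mem_univ _, ?_⟩
          have := hd i
          simp only [mulVec_zero, Pi.zero_apply, mul_zero, sub_zero]
          positivity
        simpa using this
      · have := h x hx
        have := Finset.sum_nonneg h0
        linarith
  · rintro ⟨-, h⟩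
    refine ⟨?_, fun x hx => ?_⟩
    · simp [Matrix.IsSymm, hP.eq, Matrix.mul_assoc]
    · have := h (Sum.elim x (fun i => (d i)⁻¹ * (Bᵀ *ᵥ x) i)) (fun h0 => hx (by
        ext i; exact congrFun h0 (Sum.inl i)))
      rw [schur_quad P B d hd] at this
      simpa using this

/-- Second Schur-complement step (inequality (16)) in the proof of Theorem 2. -/
theorem hinf_second_schur_step {n nd ny nz : ℕ}
    (A : Matrix (Fin n) (Fin n) ℝ) (Cy : Matrix (Fin ny) (Fin n) ℝ)
    (Cz : Matrix (Fin nz) (Fin n) ℝ) (Bd : Matrix (Fin n) (Fin nd) ℝ)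
    (Dd : Matrix (Fin ny) (Fin nd) ℝ)
    (sd : Fin nd → ℝ) (sn : Fin ny → ℝ) (hsn : ∀ i, 0 < sn i)
    (Sd : Matrix (Fin nd) (Fin nd) ℝ) (Sn : Matrix (Fin ny) (Fin ny) ℝ)
    (hSd : Sd = diagonal sd) (hSn : Sn = diagonal sn)
    (Bw : Matrix (Fin n) (Fin nd ⊕ Fin ny) ℝ) (Dw : Matrix (Fin ny) (Fin nd ⊕ Fin ny) ℝ)
    (hBw : Bw = fromCols (Bd * Sd) 0) (hDw : Dw = fromCols (Dd * Sd) Sn)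
    (X : Matrix (Fin n) (Fin n) ℝ) (hX : X.IsSymm)
    (Y : Matrix (Fin n) (Fin ny) ℝ) (γ : ℝ) (hγ : 0 < γ)
    (κ : Fin ny → ℝ) (hκ : ∀ i, κ i = (sn i)⁻¹)
    (M₁₁ : Matrix (Fin n) (Fin n) ℝ) (M₁₂ : Matrix (Fin n) (Fin nd) ℝ)
    (hM₁₁ : M₁₁ = (X * A + Y * Cy) + (X * A + Y * Cy)ᵀ)
    (hM₁₂ : M₁₂ = X * Bd * Sd + Y * Dd * Sd) :
    NegDef ((X * A + Y * Cy) + (X * A + Y * Cy)ᵀ + Czᵀ * Cz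
        + (γ ^ 2)⁻¹ • ((X * Bw + Y * Dw) * (X * Bw + Y * Dw)ᵀ)) ↔
      NegDef (fromBlocks
        M₁₁ (fromCols M₁₂ (fromCols Czᵀ Y))
        (fromRows M₁₂ᵀ (fromRows Cz Yᵀ))
        (fromBlocks (-(γ ^ 2 • (1 : Matrix (Fin nd) (Fin nd) ℝ))) 0 0
          (fromBlocks (-(1 : Matrix (Fin nz) (Fin nz) ℝ)) 0 0
            (-(γ ^ 2 • diagonal (fun i => κ i ^ 2)))))) := by
  have hg : 0 < γ ^ 2 := by positivity
  have hP : M₁₁.IsSymm := by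
    rw [hM₁₁]; simp [Matrix.IsSymm, add_comm]
  have key := schur_negDef M₁₁ hP (fromCols M₁₂ (fromCols Czᵀ Y))
    (Sum.elim (fun _ => γ ^ 2) (Sum.elim (fun _ => 1) (fun i => γ ^ 2 * κ i ^ 2)))
    (by
      rintro (i | i | i)
      · exact hg
      · exact one_pos
      · have := hsn i
        simp only [Sum.elim_inr, hκ]
        positivity)
  have hXY : X * Bw + Y * Dw = fromCols M₁₂ (Y * Sn) := by
    rw [hBw, hDw, mul_fromCols, mul_fromCols, hM₁₂]
    ext i (j | j) <;> simp [Matrix.mul_assoc]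
  convert key using 2
  · rw [← hM₁₁, hXY, add_assoc]
    congr 1
    ext i j
    simp only [Matrix.add_apply, Matrix.smul_apply, Matrix.mul_apply, mul_diagonal,
      Fintype.sum_sum_type, Matrix.transpose_apply, fromCols_apply_inl, fromCols_apply_inr,
      Sum.elim_inl, Sum.elim_inr, hSn, smul_eq_mul, hκ, diagonal_apply, mul_ite, mul_zero,
      Finset.sum_ite_eq', Finset.sum_ite_eq, Finset.mem_univ, if_true, mul_add, Finset.mul_sum]
    have e1 : ∀ a b c a' c' : ℝ, a' = a → c' = c → b + (a + c) = a' + (b + c') := by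
      intros; subst_vars; ring
    rw [Finset.sum_congr rfl fun (k : Fin nz) _ =>
      show Cz k i * Cz k j = Cz k i * 1⁻¹ * Cz k j by simp]
    apply e1
    · exact Finset.sum_congr rfl fun k _ => by ring
    · refine Finset.sum_congr rfl fun k _ => ?_
      have := (hsn k).ne'
      field_simp
  · congr 1
    · simp [transpose_fromCols]
    · ext (i | i | i) (j | j | j) <;> simp [diagonal_apply, Matrix.one_apply]
end

section
/- Under the observer setup, fix a real γ > 0 and define β ∈ ℝ^{n_y} by β_i = γ·((S_n)_{ii})⁻². There exist an n×n_y real matrix L and an n×n real symmetric positive definite matrix X such that the block matrix [[(X·(A+L·C_y)) + (X·(A+L·C_y))ᵀ + C_zᵀ·C_z, X·(B_w̄ + L·D_w̄)], [(B_w̄ + L·D_w̄)ᵀ·X, -γ²·I_{n_d+n_y}]] is negative definite, if and only if there exist an n×n real symmetric positive definite matrix X' and an n×n_y real matrix Y' such that the block matrix [[(X'·A + Y'·C_y) + (X'·A + Y'·C_y)ᵀ, X'·B_d·S_d + Y'·D_d·S_d, C_zᵀ, Y'], [(X'·B_d·S_d + Y'·D_d·S_d)ᵀ, -γ·I_{n_d},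 0, 0], [C_z, 0, -γ·I_{n_z}, 0], [Y'ᵀ, 0, 0, -diag(β)]] is negative definite. Moreover, in this case L = X'⁻¹·Y' gives a valid correspondence between the two feasibility sets. -/
open Matrix

theorem helper_quad {n nd ny nz : ℕ}
    (P : Matrix (Fin n) (Fin n) ℝ) (Q : Matrix (Fin n) (Fin nd) ℝ)
    (Cz : Matrix (Fin nz) (Fin n) ℝ) (Y : Matrix (Fin n) (Fin ny) ℝ)
    (sn : Fin ny → ℝ) (hsn : ∀ i, 0 < sn i) (γ : ℝ) (hγ : 0 < γ)
    (β : Fin ny → ℝ) (hβ : ∀ i, β i = γ * ((sn i)⁻¹) ^ 2)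
    (e : Fin n → ℝ) (w : Fin nd → ℝ) (z : Fin nz → ℝ) (v : Fin ny → ℝ) :
    γ * ((Sum.elim e (Sum.elim w (Sum.elim z (fun i => sn i * v i)))) ⬝ᵥ (fromBlocks (P + Pᵀ)
        (fromCols Q (fromCols Czᵀ Y)) (fromRows Qᵀ (fromRows Cz Yᵀ))
        (fromBlocks (-(γ • (1 : Matrix (Fin nd) (Fin nd) ℝ))) 0 0
            (fromBlocks (-(γ • (1 : Matrix (Fin nz) (Fin nz) ℝ))) 0 0
              (-(diagonal β))))).mulVec (Sum.elim e (Sum.elim w (Sum.elim z (fun i => sn i * v i)))))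
    = (Sum.elim e (Sum.elim w v)) ⬝ᵥ (fromBlocks (γ • (P + Pᵀ) + Czᵀ * Cz)
        (γ • fromCols Q (Y * diagonal sn)) (γ • (fromCols Q (Y * diagonal sn))ᵀ)
        (-(γ ^ 2 • (1 : Matrix (Fin nd ⊕ Fin ny) (Fin nd ⊕ Fin ny) ℝ)))).mulVec
          (Sum.elim e (Sum.elim w v))
      - (Cz *ᵥ e - γ • z) ⬝ᵥ (Cz *ᵥ e - γ • z) := by
  have hd : (diagonal sn) *ᵥ v = (fun i => sn i * v i) := by
    ext i; simp [mulVec_diagonal]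
  have hY : (fun i => sn i * v i) ⬝ᵥ (Yᵀ *ᵥ e) = e ⬝ᵥ (Y *ᵥ (fun i => sn i * v i)) := by
    rw [mulVec_transpose, dotProduct_comm, dotProduct_mulVec]
  have hY2 : v ⬝ᵥ ((Y * diagonal sn)ᵀ *ᵥ e) = e ⬝ᵥ (Y *ᵥ (fun i => sn i * v i)) := by
    rw [mulVec_transpose, dotProduct_comm, ← dotProduct_mulVec, ← mulVec_mulVec, hd]
  have hQ : w ⬝ᵥ (Qᵀ *ᵥ e) = e ⬝ᵥ (Q *ᵥ w) := by
    rw [mulVec_transpose, dotProduct_comm, dotProduct_mulVec]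
  have hC : ∀ z, e ⬝ᵥ (Czᵀ *ᵥ z) = (Cz *ᵥ e) ⬝ᵥ z := by
    intro z
    rw [mulVec_transpose, dotProduct_comm, ← dotProduct_mulVec, dotProduct_comm]
  have hb : (fun i => sn i * v i) ⬝ᵥ (diagonal β *ᵥ (fun i => sn i * v i)) = γ * (v ⬝ᵥ v) := by
    simp only [dotProduct, mulVec_diagonal, Finset.mul_sum]
    refine Finset.sum_congr rfl fun i _ => ?_
    have := (hsn i).ne'
    rw [hβ]; field_simp
  have hone : Sum.elim w v ⬝ᵥ Sum.elim w v = w ⬝ᵥ w + v ⬝ᵥ v := by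
    simp [sumElim_dotProduct_sumElim]
  have hz : z ⬝ᵥ (Cz *ᵥ e) = (Cz *ᵥ e) ⬝ᵥ z := dotProduct_comm _ _
  simp only [fromBlocks_mulVec, Sum.elim_comp_inl, Sum.elim_comp_inr, fromCols_mulVec,
    fromRows_mulVec, sumElim_dotProduct_sumElim, add_mulVec, smul_mulVec, neg_mulVec, one_mulVec,
    zero_mulVec, dotProduct_add, dotProduct_smul, dotProduct_neg, transpose_fromCols,
    Sum.elim_add_add, add_zero, zero_add, sub_dotProduct, dotProduct_sub,
    smul_dotProduct, smul_eq_mul, hY, hY2, hQ, hC, hb, hone, hz, ← mulVec_mulVec, hd]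
  ring

theorem helper_iff {n nd ny nz : ℕ}
    (P : Matrix (Fin n) (Fin n) ℝ) (Q : Matrix (Fin n) (Fin nd) ℝ)
    (Cz : Matrix (Fin nz) (Fin n) ℝ) (Y : Matrix (Fin n) (Fin ny) ℝ)
    (sn : Fin ny → ℝ) (hsn : ∀ i, 0 < sn i) (γ : ℝ) (hγ : 0 < γ)
    (β : Fin ny → ℝ) (hβ : ∀ i, β i = γ * ((sn i)⁻¹) ^ 2) :
    NegDef (fromBlocks (γ • (P + Pᵀ) + Czᵀ * Cz)
        (γ • fromCols Q (Y * diagonal sn)) (γ • (fromCols Q (Y * diagonal sn))ᵀ)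
        (-(γ ^ 2 • (1 : Matrix (Fin nd ⊕ Fin ny) (Fin nd ⊕ Fin ny) ℝ)))) ↔
    NegDef (fromBlocks (P + Pᵀ)
        (fromCols Q (fromCols Czᵀ Y)) (fromRows Qᵀ (fromRows Cz Yᵀ))
        (fromBlocks (-(γ • (1 : Matrix (Fin nd) (Fin nd) ℝ))) 0 0
            (fromBlocks (-(γ • (1 : Matrix (Fin nz) (Fin nz) ℝ))) 0 0
              (-(diagonal β))))) := by
  have key := helper_quad P Q Cz Y sn hsn γ hγ β hβ
  constructor
  · rintro ⟨-, h⟩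
    refine ⟨?_, ?_⟩
    · simp [IsSymm, fromBlocks_transpose, transpose_fromCols, transpose_fromRows, add_comm]
    · intro x hx
      obtain ⟨e, w, z, v, rfl⟩ : ∃ (e : Fin n → ℝ) (w : Fin nd → ℝ) (z : Fin nz → ℝ) (v : Fin ny → ℝ), x = Sum.elim e (Sum.elim w (Sum.elim z
          (fun i => sn i * v i))) := by
        refine ⟨fun i => x (.inl i), fun i => x (.inr (.inl i)), fun i => x (.inr (.inr (.inl i))),
          fun i => (sn i)⁻¹ * x (.inr (.inr (.inr i))), ?_⟩
        ext (i | i | i | i) <;> simp [(hsn _).ne']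
      refine (pos_iff_neg_of_mul_neg ?_).1 hγ
      rw [key e w z v]
      by_cases h0 : Sum.elim e (Sum.elim w v) = 0
      · have he : e = 0 := by ext i; exact congrFun h0 (.inl i)
        have hw : w = 0 := by ext i; exact congrFun h0 (.inr (.inl i))
        have hv : v = 0 := by ext i; exact congrFun h0 (.inr (.inr i))
        subst he hw hv
        have hz : z ≠ 0 := by
          rintro rfl
          apply hx
          ext (i | i | i | i) <;> simp
        rw [h0]
        have : 0 < z ⬝ᵥ z := by
          have h1 : 0 ≤ z ⬝ᵥ z := Finset.sum_nonneg fun i _ => mul_self_nonneg _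
          exact lt_of_le_of_ne h1 fun h => hz (dotProduct_self_eq_zero.1 h.symm)
        simp
        positivity
      · have h1 := h _ h0
        have h2 : 0 ≤ (Cz *ᵥ e - γ • z) ⬝ᵥ (Cz *ᵥ e - γ • z) :=
          Finset.sum_nonneg fun i _ => mul_self_nonneg _
        linarith
  · rintro ⟨-, h⟩
    refine ⟨?_, ?_⟩
    · simp [IsSymm, fromBlocks_transpose, add_comm]
    · intro x hx
      obtain ⟨e, w, v, rfl⟩ : ∃ e w v, x = Sum.elim e (Sum.elim w v) := by
        refine ⟨fun i => x (.inl i), fun i => x (.inr (.inl i)), fun i => x (.inr (.inr i)), ?_⟩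
        ext (i | i | i) <;> simp
      have k := key e w (γ⁻¹ • (Cz *ᵥ e)) v
      rw [smul_inv_smul₀ hγ.ne', sub_self, zero_dotProduct, sub_zero] at k
      rw [← k]
      refine mul_neg_of_pos_of_neg hγ (h _ ?_)
      intro h0
      apply hx
      ext (i | i | i)
      · exact congrFun h0 (.inl i)
      · exact congrFun h0 (.inr (.inl i))
      · have := congrFun h0 (.inr (.inr (.inr i)))
        simpa [(hsn i).ne'] using this

/-- Feasibility content of Theorem 2 (sparse `H∞` observer design): feasibility of the
bounded-real-lemma inequality in `(X, L)` is equivalent to feasibility of the LMI (17)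
in `(X', Y')` with `β i = γ((S_n)ᵢᵢ)⁻²`; moreover `L = X'⁻¹ Y'` gives a valid
correspondence. -/
theorem hinf_observer_feasibility {n nd ny nz : ℕ}
    (A : Matrix (Fin n) (Fin n) ℝ) (Cy : Matrix (Fin ny) (Fin n) ℝ)
    (Cz : Matrix (Fin nz) (Fin n) ℝ) (Bd : Matrix (Fin n) (Fin nd) ℝ)
    (Dd : Matrix (Fin ny) (Fin nd) ℝ)
    (sd : Fin nd → ℝ) (sn : Fin ny → ℝ) (hsn : ∀ i, 0 < sn i)
    (Sd : Matrix (Fin nd) (Fin nd) ℝ) (Sn : Matrix (Fin ny) (Fin ny) ℝ)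
    (hSd : Sd = diagonal sd) (hSn : Sn = diagonal sn)
    (Bw : Matrix (Fin n) (Fin nd ⊕ Fin ny) ℝ) (Dw : Matrix (Fin ny) (Fin nd ⊕ Fin ny) ℝ)
    (hBw : Bw = fromCols (Bd * Sd) 0) (hDw : Dw = fromCols (Dd * Sd) Sn)
    (γ : ℝ) (hγ : 0 < γ)
    (β : Fin ny → ℝ) (hβ : ∀ i, β i = γ * ((sn i)⁻¹) ^ 2) :
    ((∃ (L : Matrix (Fin n) (Fin ny) ℝ) (X : Matrix (Fin n) (Fin n) ℝ), X.PosDef ∧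
        NegDef (fromBlocks
          (X * (A + L * Cy) + (X * (A + L * Cy))ᵀ + Czᵀ * Cz)
          (X * (Bw + L * Dw))
          ((Bw + L * Dw)ᵀ * X)
          (-(γ ^ 2 • (1 : Matrix (Fin nd ⊕ Fin ny) (Fin nd ⊕ Fin ny) ℝ))))) ↔
      (∃ (X' : Matrix (Fin n) (Fin n) ℝ) (Y' : Matrix (Fin n) (Fin ny) ℝ), X'.PosDef ∧
        NegDef (fromBlocks
          ((X' * A + Y' * Cy) + (X' * A + Y' * Cy)ᵀ)
          (fromCols (X' * Bd * Sd + Y' * Dd * Sd) (fromCols Czᵀ Y'))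
          (fromRows (X' * Bd * Sd + Y' * Dd * Sd)ᵀ (fromRows Cz Y'ᵀ))
          (fromBlocks (-(γ • (1 : Matrix (Fin nd) (Fin nd) ℝ))) 0 0
            (fromBlocks (-(γ • (1 : Matrix (Fin nz) (Fin nz) ℝ))) 0 0
              (-(diagonal β)))))))
    ∧
    (∀ (X' : Matrix (Fin n) (Fin n) ℝ) (Y' : Matrix (Fin n) (Fin ny) ℝ), X'.PosDef →
      NegDef (fromBlocks
        ((X' * A + Y' * Cy) + (X' * A + Y' * Cy)ᵀ)
        (fromCols (X' * Bd * Sd + Y' * Dd * Sd) (fromCols Czᵀ Y'))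
        (fromRows (X' * Bd * Sd + Y' * Dd * Sd)ᵀ (fromRows Cz Y'ᵀ))
        (fromBlocks (-(γ • (1 : Matrix (Fin nd) (Fin nd) ℝ))) 0 0
          (fromBlocks (-(γ • (1 : Matrix (Fin nz) (Fin nz) ℝ))) 0 0
            (-(diagonal β))))) →
      ∃ X : Matrix (Fin n) (Fin n) ℝ, X.PosDef ∧
        NegDef (fromBlocks
          (X * (A + (X'⁻¹ * Y') * Cy) + (X * (A + (X'⁻¹ * Y') * Cy))ᵀ + Czᵀ * Cz)
          (X * (Bw + (X'⁻¹ * Y') * Dw))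
          ((Bw + (X'⁻¹ * Y') * Dw)ᵀ * X)
          (-(γ ^ 2 • (1 : Matrix (Fin nd ⊕ Fin ny) (Fin nd ⊕ Fin ny) ℝ))))) := by
  subst hSd hSn hBw hDw
  have core : ∀ (X' : Matrix (Fin n) (Fin n) ℝ) (L : Matrix (Fin n) (Fin ny) ℝ), X'.PosDef →
      (NegDef (fromBlocks
          ((γ • X') * (A + L * Cy) + ((γ • X') * (A + L * Cy))ᵀ + Czᵀ * Cz)
          ((γ • X') * (fromCols (Bd * diagonal sd) 0 + L * fromCols (Dd * diagonal sd) (diagonal sn)))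
          ((fromCols (Bd * diagonal sd) 0 + L * fromCols (Dd * diagonal sd) (diagonal sn))ᵀ * (γ • X'))
          (-(γ ^ 2 • (1 : Matrix (Fin nd ⊕ Fin ny) (Fin nd ⊕ Fin ny) ℝ)))) ↔
       NegDef (fromBlocks
          ((X' * A + (X' * L) * Cy) + (X' * A + (X' * L) * Cy)ᵀ)
          (fromCols (X' * Bd * diagonal sd + (X' * L) * Dd * diagonal sd) (fromCols Czᵀ (X' * L)))
          (fromRows (X' * Bd * diagonal sd + (X' * L) * Dd * diagonal sd)ᵀ (fromRows Cz (X' * L)ᵀ))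
          (fromBlocks (-(γ • (1 : Matrix (Fin nd) (Fin nd) ℝ))) 0 0
            (fromBlocks (-(γ • (1 : Matrix (Fin nz) (Fin nz) ℝ))) 0 0
              (-(diagonal β)))))) := by
    intro X' L hX
    have hs : X'ᵀ = X' := by
      have := hX.isHermitian
      rwa [IsHermitian, conjTranspose_eq_transpose_of_trivial] at this
    rw [← helper_iff _ _ Cz _ sn hsn γ hγ β hβ]
    have e1 : (γ • X') * (A + L * Cy) = γ • (X' * A + (X' * L) * Cy) := by
      simp [Matrix.mul_add, Matrix.mul_assoc]
    have e2 : X' * (fromCols (Bd * diagonal sd) 0 + L * fromCols (Dd * diagonal sd) (diagonal sn))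
        = fromCols (X' * Bd * diagonal sd + (X' * L) * Dd * diagonal sd)
            ((X' * L) * diagonal sn) := by
      simp only [Matrix.mul_add, mul_fromCols, Matrix.mul_assoc, Matrix.mul_zero]
      ext i (j | j) <;> simp
    have e3 : (fromCols (Bd * diagonal sd) 0 + L * fromCols (Dd * diagonal sd) (diagonal sn))ᵀ * X'
        = (fromCols (X' * Bd * diagonal sd + (X' * L) * Dd * diagonal sd)
            ((X' * L) * diagonal sn))ᵀ := by
      rw [← e2, transpose_mul, hs]
    rw [e1, Matrix.smul_mul, Matrix.mul_smul, e2, e3, transpose_smul, ← smul_add γ]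
  have hpos : ∀ (c : ℝ) (X : Matrix (Fin n) (Fin n) ℝ), 0 < c → X.PosDef → (c • X).PosDef :=
    fun c X hc hX => hX.smul hc
  have second : ∀ (X' : Matrix (Fin n) (Fin n) ℝ) (Y' : Matrix (Fin n) (Fin ny) ℝ), X'.PosDef →
      X' * (X'⁻¹ * Y') = Y' := by
    intro X' Y' hX
    exact mul_nonsing_inv_cancel_left _ _ ((isUnit_iff_isUnit_det _).1 hX.isUnit)
  refine ⟨⟨?_, ?_⟩, ?_⟩
  · rintro ⟨L, X, hX, h⟩
    have hX' := hpos γ⁻¹ X (inv_pos.2 hγ) hX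
    refine ⟨γ⁻¹ • X, (γ⁻¹ • X) * L, hX', (core _ L hX').1 ?_⟩
    rwa [smul_inv_smul₀ hγ.ne']
  · rintro ⟨X', Y', hX, h⟩
    refine ⟨X'⁻¹ * Y', γ • X', hpos γ X' hγ hX, (core X' _ hX).2 ?_⟩
    rwa [second X' Y' hX]
  · intro X' Y' hX h
    refine ⟨γ • X', hpos γ X' hγ hX, (core X' _ hX).2 ?_⟩
    rwa [second X' Y' hX]
end

section
/- Under the observer setup, let X be an n×n real symmetric positive definite matrix and Y an n×n_y real matrix such that the block matrix [[(X·A + Y·C_y) + (X·A + Y·C_y)ᵀ, X·B_d·S_d + Y·D_d·S_d, C_zᵀ, Y], [(X·B_d·S_d + Y·D_d·S_d)ᵀ, -γ·I_{n_d}, 0, 0], [C_z, 0, -γ·I_{n_z}, 0], [Yᵀ, 0, 0, -diag(β)]] is negative definite for some real γ > 0 and some vector β ∈ ℝ^{n_y} with positive entries. Then every complex eigenvalue of A + X⁻¹·Y·C_y has negative real part, i.e., the observer gain L = X⁻¹·Y makes the error dynamics matrix A + L·C_y Hurwitz. -/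
open Matrix

/-- Feasibility of the `H∞` LMI of Theorem 2 yields a stabilizing observer gain:
every complex eigenvalue of `A + X⁻¹ Y C_y` has negative real part. -/
theorem hinf_lmi_hurwitz {n nd ny nz : ℕ}
    (A : Matrix (Fin n) (Fin n) ℝ) (Cy : Matrix (Fin ny) (Fin n) ℝ)
    (Cz : Matrix (Fin nz) (Fin n) ℝ) (Bd : Matrix (Fin n) (Fin nd) ℝ)
    (Dd : Matrix (Fin ny) (Fin nd) ℝ)
    (sd : Fin nd → ℝ) (Sd : Matrix (Fin nd) (Fin nd) ℝ) (hSd : Sd = diagonal sd)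
    (X : Matrix (Fin n) (Fin n) ℝ) (Y : Matrix (Fin n) (Fin ny) ℝ)
    (hX : X.PosDef)
    (γ : ℝ) (hγ : 0 < γ)
    (β : Fin ny → ℝ) (hβ : ∀ i, 0 < β i)
    (hLMI : NegDef (fromBlocks
      ((X * A + Y * Cy) + (X * A + Y * Cy)ᵀ)
      (fromCols (X * Bd * Sd + Y * Dd * Sd) (fromCols Czᵀ Y))
      (fromRows (X * Bd * Sd + Y * Dd * Sd)ᵀ (fromRows Cz Yᵀ))
      (fromBlocks (-(γ • (1 : Matrix (Fin nd) (Fin nd) ℝ))) 0 0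
        (fromBlocks (-(γ • (1 : Matrix (Fin nz) (Fin nz) ℝ))) 0 0
          (-(diagonal β)))))) :
    ∀ μ : ℂ, Module.End.HasEigenvalue
      (Matrix.mulVecLin ((A + X⁻¹ * Y * Cy).map (Complex.ofReal : ℝ → ℂ))) μ →
      μ.re < 0 := by
  intro μ hμ
  have hN : ∀ x : Fin n → ℝ, x ≠ 0 → x ⬝ᵥ (X * A + Y * Cy) *ᵥ x < 0 := by
    intro x hx
    have h := hLMI.2 (Sum.elim x 0) (by
      intro h0
      apply hx
      funext i
      exact congrFun h0 (Sum.inl i))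
    rw [fromBlocks_mulVec] at h
    simp only [sumElim_dotProduct_sumElim, Sum.elim_comp_inl, Sum.elim_comp_inr, mulVec_zero,
      add_zero, zero_dotProduct, add_mulVec, dotProduct_add] at h
    have ht : x ⬝ᵥ (X * A + Y * Cy)ᵀ *ᵥ x = x ⬝ᵥ (X * A + Y * Cy) *ᵥ x := by
      rw [mulVec_transpose, dotProduct_comm, dotProduct_mulVec]
    rw [ht, add_mulVec, dotProduct_add] at h
    rw [add_mulVec, dotProduct_add]
    linarith
  have hdet : IsUnit X.det := hX.det_pos.ne'.isUnit
  have hXM : X * (A + X⁻¹ * Y * Cy) = X * A + Y * Cy := by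
    rw [Matrix.mul_add, Matrix.mul_assoc X⁻¹, Matrix.mul_nonsing_inv_cancel_left _ _ hdet]
  generalize A + X⁻¹ * Y * Cy = M at hμ hXM
  rw [← hXM] at hN
  obtain ⟨v, hv⟩ := hμ.exists_hasEigenvector
  have hv0 := hv.2
  have hve := hv.apply_eq_smul
  rw [mulVecLin_apply] at hve
  set a : Fin n → ℝ := fun i => (v i).re with ha
  set b : Fin n → ℝ := fun i => (v i).im with hb
  have hMa : M *ᵥ a = μ.re • a - μ.im • b := by
    funext i
    have := congrArg Complex.re (congrFun hve i)
    simpa [mulVec, dotProduct, ha, hb] using this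
  have hMb : M *ᵥ b = μ.re • b + μ.im • a := by
    funext i
    have := congrArg Complex.im (congrFun hve i)
    simpa [mulVec, dotProduct, ha, hb] using this
  have hsym : a ⬝ᵥ X *ᵥ b = b ⬝ᵥ X *ᵥ a := by
    have hT : Xᵀ = X := by simpa [IsHermitian, conjTranspose_eq_transpose_of_trivial] using hX.1
    rw [dotProduct_mulVec, ← mulVec_transpose, hT, dotProduct_comm]
  have key : a ⬝ᵥ (X * M) *ᵥ a + b ⬝ᵥ (X * M) *ᵥ b
      = μ.re * (a ⬝ᵥ X *ᵥ a + b ⬝ᵥ X *ᵥ b) := by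
    rw [← mulVec_mulVec, ← mulVec_mulVec, hMa, hMb]
    simp only [mulVec_sub, mulVec_add, mulVec_smul, dotProduct_sub, dotProduct_add,
      dotProduct_smul, smul_eq_mul, hsym]
    ring
  have hN' : ∀ x : Fin n → ℝ, x ⬝ᵥ (X * M) *ᵥ x ≤ 0 := by
    intro x
    by_cases hx : x = 0
    · simp [hx]
    · exact (hN x hx).le
  have hP : ∀ x : Fin n → ℝ, 0 ≤ x ⬝ᵥ X *ᵥ x := by
    intro x
    simpa using hX.posSemidef.dotProduct_mulVec_nonneg x
  have hneg : a ⬝ᵥ (X * M) *ᵥ a + b ⬝ᵥ (X * M) *ᵥ b < 0 := by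
    by_cases h0 : a = 0
    · have hb0 : b ≠ 0 := by
        intro h1
        apply hv0
        funext i
        exact Complex.ext (congrFun h0 i) (congrFun h1 i)
      linarith [hN b hb0, hN' a]
    · linarith [hN a h0, hN' b]
  rw [key] at hneg
  by_contra hc
  push Not at hc
  have := mul_nonneg hc (add_nonneg (hP a) (hP b))
  linarith
end
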